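/- Let a, b, c, x₁, x₂ be real numbers with ρ := √(x₁² + x₂²) > 0, and let M = M(1,a,b,c,x₁,x₂) be the meridional EFG tensor with parameter α = 1. Then for every λ ∈ ℝ, det(λ·I₃ − M) = (λ − a/ρ)·(λ² − b² − c²); hence the eigenvalues of M are exactly a/ρ, +√(b² + c²), and −√(b² + c²). Moreover trace(M) = a/ρ, the second principal invariant equals −(b² + c²), and det(M) = −(a/ρ)·(b² + c²). -/

import Mathlib

/-- The meridional EFG (electric field gradient) tensor, with `a = E_ρ`,
`b = ∂E_ρ/∂x₀`, `c = ∂E_ρ/∂ρ`, `ρ = √(x₁² + x₂²)`. -/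
noncomputable def meridionalEFG (α a b c x₁ x₂ : ℝ) : Matrix (Fin 3) (Fin 3) ℝ :=
  let ρ := Real.sqrt (x₁ ^ 2 + x₂ ^ 2)
  !![-c + (α - 1) * a / ρ, b * x₁ / ρ, b * x₂ / ρ;
     b * x₁ / ρ, c * x₁ ^ 2 / ρ ^ 2 + (a / ρ) * x₂ ^ 2 / ρ ^ 2, (c - a / ρ) * x₁ * x₂ / ρ ^ 2;
     b * x₂ / ρ, (c - a / ρ) * x₁ * x₂ / ρ ^ 2, c * x₂ ^ 2 / ρ ^ 2 + (a / ρ) * x₁ ^ 2 / ρ ^ 2]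

/-- The second principal invariant of a 3×3 matrix: the sum of its three
principal 2×2 minors. -/
def secondInvariant (M : Matrix (Fin 3) (Fin 3) ℝ) : ℝ :=
  (M 0 0 * M 1 1 - M 0 1 * M 1 0) + (M 0 0 * M 2 2 - M 0 2 * M 2 0)
    + (M 1 1 * M 2 2 - M 1 2 * M 2 1)

/-!
In the orthonormal frame of the axial, radial and azimuthal directions at `(x₁, x₂)`, the tensor is
block diagonal: the azimuthal direction is an eigenvector with eigenvalue `a / ρ`, and the meridian
plane carries the symmetric block with rows `(-c + (α - 1) * a / ρ, b)` and `(b, c)`. For `α = 1`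
this block is traceless and its square is `b ^ 2 + c ^ 2` times the identity.
-/

lemma det_smul_one_sub_units_conj {n R : Type*} [Fintype n] [DecidableEq n] [CommRing R]
    (U : (Matrix n n R)ˣ) (A : Matrix n n R) (t : R) :
    (t • (1 : Matrix n n R) - U.val * A * U⁻¹.val).det = (t • (1 : Matrix n n R) - A).det := by
  have conj_sub : t • (1 : Matrix n n R) - U.val * A * U⁻¹.val =
      U.val * (t • (1 : Matrix n n R) - A) * U⁻¹.val := by
    simp [mul_sub, sub_mul]
  rw [conj_sub, Matrix.det_units_conj]

lemma secondInvariant_eq_trace (A : Matrix (Fin 3) (Fin 3) ℝ) :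
    secondInvariant A = (A.trace ^ 2 - (A ^ 2).trace) / 2 := by
  simp only [secondInvariant, Matrix.trace_fin_three, pow_two A, Matrix.mul_apply,
    Fin.sum_univ_three]
  ring

lemma secondInvariant_units_conj (U : (Matrix (Fin 3) (Fin 3) ℝ)ˣ)
    (A : Matrix (Fin 3) (Fin 3) ℝ) :
    secondInvariant (U.val * A * U⁻¹.val) = secondInvariant A := by
  simp only [secondInvariant_eq_trace, Units.conj_pow, Matrix.trace_units_conj]

section CylindricalFrame

variable {R : Type*} [CommRing R]

/-- The change of basis from the axial, radial and azimuthal unit vectors at a point whose radial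
direction is `(u, v)` to the standard basis: these unit vectors are its columns. -/
def cylindricalFrame (u v : R) (h : u ^ 2 + v ^ 2 = 1) : (Matrix (Fin 3) (Fin 3) R)ˣ where
  val := !![1, 0, 0; 0, u, -v; 0, v, u]
  inv := !![1, 0, 0; 0, u, v; 0, -v, u]
  val_inv := by simp [Matrix.one_fin_three, ← pow_two, h, add_comm (v ^ 2), mul_comm]
  inv_val := by simp [Matrix.one_fin_three, ← pow_two, h, add_comm (v ^ 2), mul_comm]

/-- The meridional EFG tensor in the cylindrical frame, with the azimuthal eigenvalue `a / ρ`
replaced by a free parameter `k`. -/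
def cylindricalEFG (α b c k : R) : Matrix (Fin 3) (Fin 3) R :=
  !![-c + (α - 1) * k, b, 0;
     b, c, 0;
     0, 0, k]

lemma det_smul_one_sub_cylindricalEFG (α b c k t : R) :
    (t • (1 : Matrix (Fin 3) (Fin 3) R) - cylindricalEFG α b c k).det =
      (t - k) * (t ^ 2 - b ^ 2 - c ^ 2 - (α - 1) * k * (t - c)) := by
  simp only [cylindricalEFG, Matrix.det_fin_three, Matrix.sub_apply, Matrix.smul_apply,
    Matrix.one_fin_three, Matrix.of_apply, Matrix.cons_val', Matrix.cons_val,
    Matrix.cons_val_fin_one, smul_eq_mul]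
  ring

lemma det_cylindricalEFG (α b c k : R) :
    (cylindricalEFG α b c k).det = -k * (b ^ 2 + c ^ 2 - (α - 1) * k * c) := by
  simp only [cylindricalEFG, Matrix.det_fin_three, Matrix.of_apply, Matrix.cons_val',
    Matrix.cons_val, Matrix.cons_val_fin_one]
  ring

lemma trace_cylindricalEFG (α b c k : R) : (cylindricalEFG α b c k).trace = α * k := by
  rw [cylindricalEFG, Matrix.trace_fin_three_of]
  ring

end CylindricalFrame

lemma secondInvariant_cylindricalEFG (α b c k : ℝ) :
    secondInvariant (cylindricalEFG α b c k) = -(b ^ 2 + c ^ 2) + (α - 1) * k * (c + k) := by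
  simp only [secondInvariant, cylindricalEFG, Matrix.of_apply, Matrix.cons_val',
    Matrix.cons_val, Matrix.cons_val_fin_one]
  ring

lemma div_sqrt_sq_add_div_sqrt_sq {x y : ℝ} (h : 0 < √(x ^ 2 + y ^ 2)) :
    (x / √(x ^ 2 + y ^ 2)) ^ 2 + (y / √(x ^ 2 + y ^ 2)) ^ 2 = 1 := by
  rw [div_pow, div_pow, ← add_div, Real.sq_sqrt (by positivity),
    div_self (Real.sqrt_pos.mp h).ne']

lemma sub_sq_eq_iff_eq_add_sqrt_or_eq_sub_sqrt {x m r : ℝ} (hr : 0 ≤ r) :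
    (x - m) ^ 2 = r ↔ x = m + √r ∨ x = m - √r := by
  rw [← Real.sq_sqrt hr, sq_eq_sq_iff_eq_or_eq_neg, Real.sq_sqrt hr, sub_eq_iff_eq_add',
    sub_eq_iff_eq_add', ← sub_eq_add_neg]

lemma det_smul_one_sub_cylindricalEFG_eq_zero_iff (α b c k t : ℝ) :
    (t • (1 : Matrix (Fin 3) (Fin 3) ℝ) - cylindricalEFG α b c k).det = 0 ↔
      t = k ∨ t = (α - 1) * k / 2 + √(b ^ 2 + (c - (α - 1) * k / 2) ^ 2) ∨
        t = (α - 1) * k / 2 - √(b ^ 2 + (c - (α - 1) * k / 2) ^ 2) := by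
  have complete_square : t ^ 2 - b ^ 2 - c ^ 2 - (α - 1) * k * (t - c) =
      (t - (α - 1) * k / 2) ^ 2 - (b ^ 2 + (c - (α - 1) * k / 2) ^ 2) := by
    ring
  rw [det_smul_one_sub_cylindricalEFG, complete_square, mul_eq_zero, sub_eq_zero, sub_eq_zero,
    sub_sq_eq_iff_eq_add_sqrt_or_eq_sub_sqrt (by positivity)]

lemma meridionalEFG_eq_units_conj (α a b c : ℝ) {x₁ x₂ : ℝ} (hρ : 0 < √(x₁ ^ 2 + x₂ ^ 2)) :
    let U := cylindricalFrame _ _ (div_sqrt_sq_add_div_sqrt_sq hρ)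
    meridionalEFG α a b c x₁ x₂ =
      U.val * cylindricalEFG α b c (a / √(x₁ ^ 2 + x₂ ^ 2)) * U⁻¹.val := by
  simp only [meridionalEFG, cylindricalFrame, cylindricalEFG, Units.inv_mk, Matrix.mul_fin_three]
  ring_nf

theorem meridionalEFG_alpha_one_general
    (α a b c x₁ x₂ : ℝ) (hρ : 0 < √(x₁ ^ 2 + x₂ ^ 2)) :
    let k := a / √(x₁ ^ 2 + x₂ ^ 2)
    let M := meridionalEFG α a b c x₁ x₂
    (∀ t : ℝ, (t • (1 : Matrix (Fin 3) (Fin 3) ℝ) - M).det =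
      (t - k) * (t ^ 2 - b ^ 2 - c ^ 2 - (α - 1) * k * (t - c))) ∧
    (∀ t : ℝ, (t • (1 : Matrix (Fin 3) (Fin 3) ℝ) - M).det = 0 ↔
      t = k ∨ t = (α - 1) * k / 2 + √(b ^ 2 + (c - (α - 1) * k / 2) ^ 2) ∨
        t = (α - 1) * k / 2 - √(b ^ 2 + (c - (α - 1) * k / 2) ^ 2)) ∧
    M.trace = α * k ∧
    secondInvariant M = -(b ^ 2 + c ^ 2) + (α - 1) * k * (c + k) ∧
    M.det = -k * (b ^ 2 + c ^ 2 - (α - 1) * k * c) := by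
  intro k M
  simp only [M, meridionalEFG_eq_units_conj α a b c hρ, det_smul_one_sub_units_conj,
    Matrix.trace_units_conj, secondInvariant_units_conj, Matrix.det_units_conj]
  exact ⟨det_smul_one_sub_cylindricalEFG α b c k,
    det_smul_one_sub_cylindricalEFG_eq_zero_iff α b c k, trace_cylindricalEFG α b c k,
    secondInvariant_cylindricalEFG α b c k, det_cylindricalEFG α b c k⟩

/-- the case α = 1 (the Fueter holomorphic potential setting). -/
theorem meridionalEFG_alpha_one
    (a b c x₁ x₂ : ℝ) (hρ : 0 < Real.sqrt (x₁ ^ 2 + x₂ ^ 2)) :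
    (∀ lam : ℝ,
        (lam • (1 : Matrix (Fin 3) (Fin 3) ℝ) - meridionalEFG 1 a b c x₁ x₂).det =
          (lam - a / Real.sqrt (x₁ ^ 2 + x₂ ^ 2)) * (lam ^ 2 - b ^ 2 - c ^ 2)) ∧
    (∀ lam : ℝ,
        (lam • (1 : Matrix (Fin 3) (Fin 3) ℝ) - meridionalEFG 1 a b c x₁ x₂).det = 0 ↔
          lam = a / Real.sqrt (x₁ ^ 2 + x₂ ^ 2) ∨
          lam = Real.sqrt (b ^ 2 + c ^ 2) ∨ lam = -Real.sqrt (b ^ 2 + c ^ 2)) ∧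
    (meridionalEFG 1 a b c x₁ x₂).trace = a / Real.sqrt (x₁ ^ 2 + x₂ ^ 2) ∧
    secondInvariant (meridionalEFG 1 a b c x₁ x₂) = -(b ^ 2 + c ^ 2) ∧
    (meridionalEFG 1 a b c x₁ x₂).det =
      -(a / Real.sqrt (x₁ ^ 2 + x₂ ^ 2)) * (b ^ 2 + c ^ 2) := by
  simpa only [sub_self, zero_mul, zero_div, sub_zero, zero_add, zero_sub, add_zero, one_mul]
    using meridionalEFG_alpha_one_general 1 a b c x₁ x₂ hρ
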